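/- No homogeneous tetrahedron is monostable: for any four affinely independent points A, B, C, D in ℝ³, it is not the case that the tetrahedron is stable on exactly one face when the load point is the vertex centroid (A + B + C + D)/4. -/

import Mathlib

/-!
Let `uᵢ` be the altitude vector from the `i`-th facet of a simplex to its opposite vertex, and
`hᵢ = ‖uᵢ‖`. The barycentric coordinates of `p` are `⟪uᵢ, p - footᵢ⟫ / hᵢ ^ 2`, so projecting the
centroid onto the `i`-th facet changes the `j`-th one from `1 / (n + 1)` to
`(1 - ⟪uᵢ, uⱼ⟫ / hⱼ ^ 2) / (n + 1)`, and the simplex is stable on that facet iff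
`⟪uᵢ, uⱼ⟫ < hⱼ ^ 2` for all `j ≠ i`. Cauchy–Schwarz gives this inequality whenever `hᵢ ≤ hⱼ`.
Hence the simplex is stable on the facet of smallest altitude `hᵢ`, and on that of the second
smallest `hₖ` except perhaps for the inequality `⟪uₖ, uᵢ⟫ < hᵢ ^ 2`. For the latter, pair `uₖ` with
the relation `∑ uₗ / hₗ ^ 2 = 0`: the `n - 1` terms with `l ≠ i, k` are greater than
`-hₖ / hₗ ≥ -1`, so `⟪uₖ, uᵢ⟫ / hᵢ ^ 2 < n - 2`, which is at most `1` in dimension `n ≤ 3`.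
-/

open RealInnerProductSpace

noncomputable section

abbrev E3 : Type := EuclideanSpace ℝ (Fin 3)

/-- The tetrahedron with load point `p` is *stable* on the face with vertices
`v₁, v₂, v₃`: the orthogonal projection of `p` onto the affine span of the face
lies in the relative (intrinsic) interior of the face. -/
def StableOn (p v₁ v₂ v₃ : E3) : Prop :=
  ∃ q ∈ intrinsicInterior ℝ (convexHull ℝ ({v₁, v₂, v₃} : Set E3)),
    ∀ w ∈ (affineSpan ℝ ({v₁, v₂, v₃} : Set E3)).direction, ⟪p - q, w⟫ = 0

/-- Placed on the face with vertices `apex, e₁, e₂` and load point `p`, the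
tetrahedron *tips over* the edge `e₁e₂` onto the adjacent face: the orthogonal
projection `q` of `p` onto the plane of the face lies strictly on the opposite
side of the line through `e₁, e₂` from the remaining vertex `apex`. -/
def TipsOver (p apex e₁ e₂ : E3) : Prop :=
  ∃ q ∈ affineSpan ℝ ({apex, e₁, e₂} : Set E3),
    (∀ w ∈ (affineSpan ℝ ({apex, e₁, e₂} : Set E3)).direction, ⟪p - q, w⟫ = 0) ∧
    (affineSpan ℝ ({e₁, e₂} : Set E3)).SOppSide q apex

/-- The edge `PQ` of the tetrahedron `PQRS` is *obtuse*: writing `R'`, `S'` for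
the components of `R - P`, `S - P` orthogonal to `Q - P`, we have `⟪R', S'⟫ < 0`. -/
def ObtuseEdge (P Q R S : E3) : Prop :=
  ⟪(R - P) - (⟪R - P, Q - P⟫ / ⟪Q - P, Q - P⟫) • (Q - P),
   (S - P) - (⟪S - P, Q - P⟫ / ⟪Q - P, Q - P⟫) • (Q - P)⟫ < 0

/-- Stability on the `i`-th face of tetrahedron `ABCD` (the face opposite the
`i`-th vertex). -/
def FaceStable (A B C D p : E3) : Fin 4 → Prop
  | 0 => StableOn p B C D
  | 1 => StableOn p A C D
  | 2 => StableOn p A B D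
  | 3 => StableOn p A B C

open Affine EuclideanGeometry

section Simplex

variable {V P : Type*} [NormedAddCommGroup V] [InnerProductSpace ℝ V] [MetricSpace P]
  [NormedAddTorsor V P] {n : ℕ}

theorem real_inner_altitude_self [NeZero n] (s : Simplex ℝ P n) (i : Fin (n + 1)) :
    ⟪s.points i -ᵥ s.altitudeFoot i, s.points i -ᵥ s.altitudeFoot i⟫ = s.height i ^ 2 := by
  rw [real_inner_self_eq_norm_sq, ← dist_eq_norm_vsub, Simplex.height]

theorem inner_altitude_affineCombination_vsub_altitudeFoot [NeZero n] (s : Simplex ℝ P n)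
    {w : Fin (n + 1) → ℝ} (hw : ∑ j, w j = 1) (i : Fin (n + 1)) :
    ⟪s.points i -ᵥ s.altitudeFoot i,
      Finset.univ.affineCombination ℝ s.points w -ᵥ s.altitudeFoot i⟫ =
      w i * s.height i ^ 2 := by
  rw [← Finset.sum_smul_vsub_const_eq_affineCombination_vsub _ _ _ _ hw, inner_sum,
    Finset.sum_eq_single i]
  · rw [inner_smul_right, real_inner_altitude_self]
  · intro j _ hji
    rw [inner_smul_right, real_inner_comm,
      s.inner_vsub_altitudeFoot_vsub_altitudeFoot_eq_zero hji.symm, mul_zero]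
  · simp

theorem inner_altitude_affineCombination_vsub_altitudeFoot_pos_iff [NeZero n] (s : Simplex ℝ P n)
    {w : Fin (n + 1) → ℝ} (hw : ∑ j, w j = 1) {i : Fin (n + 1)} :
    0 < ⟪s.points i -ᵥ s.altitudeFoot i,
      Finset.univ.affineCombination ℝ s.points w -ᵥ s.altitudeFoot i⟫ ↔ 0 < w i := by
  rw [inner_altitude_affineCombination_vsub_altitudeFoot s hw,
    mul_pos_iff_of_pos_right (pow_pos (s.height_pos i) 2)]

theorem affineCombination_vsub_orthogonalProjectionSpan_faceOpposite [NeZero n]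
    (s : Simplex ℝ P n) {w : Fin (n + 1) → ℝ} (hw : ∑ j, w j = 1) (i : Fin (n + 1)) :
    Finset.univ.affineCombination ℝ s.points w -ᵥ
      ((s.faceOpposite i).orthogonalProjectionSpan
        (Finset.univ.affineCombination ℝ s.points w) : P) =
      w i • (s.points i -ᵥ s.altitudeFoot i) := by
  let proj : P →ᵃ[ℝ] P := (AffineSubspace.subtype _).comp
    (s.faceOpposite i).orthogonalProjectionSpan.toAffineMap
  change _ -ᵥ proj _ = w i • (s.points i -ᵥ proj (s.points i))
  rw [Finset.map_affineCombination _ _ _ hw, ← Finset.sum_smul_vsub_eq_affineCombination_vsub,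
    Finset.sum_eq_single i]
  · rfl
  · intro j _ hji
    have hj : proj (s.points j) = s.points j :=
      orthogonalProjection_eq_self_iff.2 ((s.points_mem_affineSpan_faceOpposite).2 hji)
    rw [Function.comp_apply, hj, vsub_self, smul_zero]
  · simp

theorem mem_interior_faceOpposite_iff [n.AtLeastTwo] (s : Simplex ℝ P n) {i : Fin (n + 1)} {q : P}
    (hq : q ∈ affineSpan ℝ (Set.range (s.faceOpposite i).points)) :
    q ∈ (s.faceOpposite i).interior ↔
      ∀ j ≠ i, 0 < ⟪s.points j -ᵥ s.altitudeFoot j, q -ᵥ s.altitudeFoot j⟫ := by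
  have := Nat.AtLeastTwo.neZero_sub_one (n := n)
  obtain ⟨w, hw, rfl⟩ :=
    eq_affineCombination_of_mem_affineSpan_of_fintype (s.affineSpan_faceOpposite_le i hq)
  have hwi : w i = 0 := (Simplex.affineCombination_mem_affineSpan_faceOpposite_iff hw).1 hq
  rw [Simplex.faceOpposite, s.affineCombination_mem_interior_face_iff_pos _ hw]
  simp [inner_altitude_affineCombination_vsub_altitudeFoot_pos_iff s hw, hwi]

theorem orthogonalProjectionSpan_affineCombination_mem_interior_faceOpposite_iff [n.AtLeastTwo]
    (s : Simplex ℝ P n) {w : Fin (n + 1) → ℝ} (hw : ∑ j, w j = 1) {i : Fin (n + 1)} :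
    ((s.faceOpposite i).orthogonalProjectionSpan
        (Finset.univ.affineCombination ℝ s.points w) : P) ∈ (s.faceOpposite i).interior ↔
      ∀ j ≠ i, w i * ⟪s.points i -ᵥ s.altitudeFoot i, s.points j -ᵥ s.altitudeFoot j⟫ <
        w j * s.height j ^ 2 := by
  set p := Finset.univ.affineCombination ℝ s.points w
  set q : P := ↑((s.faceOpposite i).orthogonalProjectionSpan p)
  have hpq : p -ᵥ q = w i • (s.points i -ᵥ s.altitudeFoot i) :=
    affineCombination_vsub_orthogonalProjectionSpan_faceOpposite s hw i
  rw [mem_interior_faceOpposite_iff s (SetLike.coe_mem _)]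
  refine forall₂_congr fun j _ ↦ ?_
  rw [← vsub_sub_vsub_cancel_left q (s.altitudeFoot j) p, inner_sub_right, hpq, inner_smul_right,
    inner_altitude_affineCombination_vsub_altitudeFoot s hw, sub_pos,
    real_inner_comm (s.points i -ᵥ s.altitudeFoot i)]

theorem interior_subset_intrinsicInterior_convexHull [NeZero n] (s : Simplex ℝ V n) :
    s.interior ⊆ intrinsicInterior ℝ (convexHull ℝ (Set.range s.points)) := by
  have hspan := affineSpan_convexHull (𝕜 := ℝ) (Set.range s.points)
  let U : Set V := {x | ∀ i, 0 < ⟪s.points i -ᵥ s.altitudeFoot i, x -ᵥ s.altitudeFoot i⟫}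
  have hU : IsOpen U := by
    simp only [U, Set.ofPred_forall]
    exact isOpen_iInter_of_finite fun i ↦ isOpen_lt continuous_const (by fun_prop)
  have hUhull (x) (hx : x ∈ affineSpan ℝ (Set.range s.points)) (hxU : x ∈ U) :
      x ∈ convexHull ℝ (Set.range s.points) := by
    obtain ⟨w, hw, rfl⟩ := eq_affineCombination_of_mem_affineSpan_of_fintype hx
    exact affineCombination_mem_convexHull (fun i _ ↦
      ((inner_altitude_affineCombination_vsub_altitudeFoot_pos_iff s hw).1 (hxU i)).le) hw
  rintro _ ⟨w, hw, hwI, rfl⟩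
  have hwU : Finset.univ.affineCombination ℝ s.points w ∈ U := fun i ↦
    (inner_altitude_affineCombination_vsub_altitudeFoot_pos_iff s hw).2 (hwI i).1
  exact mem_intrinsicInterior.2
    ⟨⟨_, hspan ▸ affineCombination_mem_affineSpan hw _⟩,
      mem_interior.2 ⟨(↑) ⁻¹' U, fun x hx ↦ hUhull x (hspan ▸ x.2) hx,
        hU.preimage continuous_subtype_val, hwU⟩, rfl⟩

theorem inner_altitudes_lt_height_sq_of_height_le [n.AtLeastTwo] (s : Simplex ℝ P n)
    {i j : Fin (n + 1)} (hij : i ≠ j) (hle : s.height i ≤ s.height j) :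
    ⟪s.points i -ᵥ s.altitudeFoot i, s.points j -ᵥ s.altitudeFoot j⟫ < s.height j ^ 2 :=
  calc
    _ < s.height i * s.height j := lt_of_abs_lt (s.abs_inner_vsub_altitudeFoot_lt_mul hij)
    _ ≤ s.height j ^ 2 := by rw [sq]; gcongr

theorem neg_one_lt_inv_height_sq_mul_inner_altitudes_of_height_le [n.AtLeastTwo]
    (s : Simplex ℝ P n) {i j : Fin (n + 1)} (hle : s.height i ≤ s.height j) :
    -1 < (s.height j)⁻¹ ^ 2 *
      ⟪s.points i -ᵥ s.altitudeFoot i, s.points j -ᵥ s.altitudeFoot j⟫ := by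
  rw [inv_pow, ← div_eq_inv_mul, lt_div_iff₀ (by positivity)]
  calc
    -1 * s.height j ^ 2 ≤ -(s.height i * s.height j) := by
      rw [neg_one_mul, sq]; gcongr
    _ < _ := s.neg_mul_lt_inner_vsub_altitudeFoot i j

theorem inner_altitudes_lt_sub_two_mul_height_sq_of_forall_height_le [n.AtLeastTwo]
    (s : Simplex ℝ P n) {i k : Fin (n + 1)} (hki : k ≠ i)
    (hk : ∀ l ≠ i, s.height k ≤ s.height l) :
    ⟪s.points k -ᵥ s.altitudeFoot k, s.points i -ᵥ s.altitudeFoot i⟫ <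
      (n - 2) * s.height i ^ 2 := by
  let c (l : Fin (n + 1)) : ℝ :=
    (s.height l)⁻¹ ^ 2 * ⟪s.points k -ᵥ s.altitudeFoot k, s.points l -ᵥ s.altitudeFoot l⟫
  let rest : Finset (Fin (n + 1)) := {i, k}ᶜ
  have hn : 2 ≤ n := Nat.AtLeastTwo.prop
  have hck : c k = 1 := by
    simp only [c, real_inner_altitude_self]
    rw [← mul_pow, inv_mul_cancel₀ (s.height_pos k).ne', one_pow]
  have hsum : c i + c k + ∑ l ∈ rest, c l = 0 := by
    rw [← Finset.sum_pair hki.symm, Finset.sum_add_sum_compl]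
    simpa only [inner_sum, inner_smul_right, inner_zero_right] using
      congrArg (⟪s.points k -ᵥ s.altitudeFoot k, ·⟫) s.sum_inv_height_sq_smul_vsub_eq_zero
  have hcard : rest.card = n - 1 := by
    rw [Finset.card_compl, Finset.card_pair hki.symm, Fintype.card_fin]; omega
  have hrest : -(n - 1 : ℝ) < ∑ l ∈ rest, c l :=
    calc
      -(n - 1 : ℝ) = ∑ l ∈ rest, (-1 : ℝ) := by
        rw [Finset.sum_const, hcard, nsmul_eq_mul, mul_neg_one, Nat.cast_pred (by omega)]
      _ < ∑ l ∈ rest, c l := Finset.sum_lt_sum_of_nonempty (Finset.card_pos.1 (by omega))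
        fun l hl ↦ neg_one_lt_inv_height_sq_mul_inner_altitudes_of_height_le s <|
          hk l fun hli ↦ by simp [rest, hli] at hl
  have hci : c i < n - 2 := by linarith
  rwa [← div_lt_iff₀ (by positivity), div_eq_inv_mul, ← inv_pow]

theorem orthogonalProjectionSpan_centroid_mem_interior_faceOpposite_iff [n.AtLeastTwo]
    (s : Simplex ℝ P n) {i : Fin (n + 1)} :
    ((s.faceOpposite i).orthogonalProjectionSpan s.centroid : P) ∈
        (s.faceOpposite i).interior ↔
      ∀ j ≠ i, ⟪s.points i -ᵥ s.altitudeFoot i, s.points j -ᵥ s.altitudeFoot j⟫ <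
        s.height j ^ 2 := by
  have hw := Finset.sum_centroidWeights_eq_one_of_nonempty ℝ _
    (Finset.univ_nonempty (α := Fin (n + 1)))
  rw [Simplex.centroid_eq_affineCombination,
    orthogonalProjectionSpan_affineCombination_mem_interior_faceOpposite_iff s hw]
  simp_rw [Finset.centroidWeights_apply]
  refine forall₂_congr fun j _ ↦ mul_lt_mul_iff_of_pos_left ?_
  exact inv_pos.2 (Nat.cast_pos.2 Finset.univ_nonempty.card_pos)

theorem centroid_eq_inv_smul_sum_points (s : Simplex ℝ V n) :
    s.centroid = (n + 1 : ℝ)⁻¹ • ∑ i, s.points i := by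
  simpa only [vsub_eq_sub, sub_zero] using s.centroid_vsub_eq 0

/-- Stability of the simplex `s` with load point `p` on the facet opposite its `i`-th vertex: the
orthogonal projection of `p` onto the affine span of that facet lies in the relative interior of
the facet. This extends `FaceStable` from tetrahedra to simplices of any dimension. -/
def StableOnFacet [NeZero n] (s : Simplex ℝ V n) (p : V) (i : Fin (n + 1)) : Prop :=
  ((s.faceOpposite i).orthogonalProjectionSpan p : V) ∈
    intrinsicInterior ℝ (convexHull ℝ (Set.range (s.faceOpposite i).points))

theorem stableOnFacet_centroid_of_inner_altitudes_lt [n.AtLeastTwo] (s : Simplex ℝ V n)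
    {i : Fin (n + 1)}
    (h : ∀ j ≠ i, ⟪s.points i -ᵥ s.altitudeFoot i, s.points j -ᵥ s.altitudeFoot j⟫ <
      s.height j ^ 2) :
    StableOnFacet s s.centroid i :=
  have := Nat.AtLeastTwo.neZero_sub_one (n := n)
  interior_subset_intrinsicInterior_convexHull _
    ((orthogonalProjectionSpan_centroid_mem_interior_faceOpposite_iff s).2 h)

theorem homogeneous_tetrahedron_not_monostable_general [n.AtLeastTwo] (hn : n ≤ 3)
    (s : Simplex ℝ V n) : ¬ ∃! i, StableOnFacet s s.centroid i := by
  obtain ⟨i, hi⟩ := Finite.exists_min s.height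
  obtain ⟨k, hki, hk⟩ := Set.exists_min_image {i}ᶜ s.height (Set.toFinite _)
    (Set.nonempty_compl_of_nontrivial i)
  have hi_stable : StableOnFacet s s.centroid i :=
    stableOnFacet_centroid_of_inner_altitudes_lt s fun j hj ↦
      inner_altitudes_lt_height_sq_of_height_le s hj.symm (hi j)
  have hk_stable : StableOnFacet s s.centroid k :=
    stableOnFacet_centroid_of_inner_altitudes_lt s fun j hj ↦ by
      obtain rfl | hji := eq_or_ne j i
      · refine (inner_altitudes_lt_sub_two_mul_height_sq_of_forall_height_le s hki hk).trans_le ?_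
        have hn_cast : (n : ℝ) ≤ 3 := mod_cast hn
        exact mul_le_of_le_one_left (sq_nonneg _) (by linarith)
      · exact inner_altitudes_lt_height_sq_of_height_le s hj.symm (hk j hji)
  exact fun hunique ↦ hki (hunique.unique hk_stable hi_stable)

end Simplex

theorem stableOn_iff_of_range_points_eq {m : ℕ} (t : Simplex ℝ E3 m) {p v₁ v₂ v₃ : E3}
    (ht : Set.range t.points = {v₁, v₂, v₃}) :
    StableOn p v₁ v₂ v₃ ↔ (t.orthogonalProjectionSpan p : E3) ∈
      intrinsicInterior ℝ (convexHull ℝ (Set.range t.points)) := by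
  rw [StableOn, ← ht]
  refine ⟨fun ⟨q, hq, hpq⟩ ↦ ?_, fun h ↦ ⟨_, h, ?_⟩⟩
  · have hq_eq : (t.orthogonalProjectionSpan p : E3) = q :=
      coe_orthogonalProjection_eq_iff_mem.2 ⟨convexHull_subset_affineSpan _
        (intrinsicInterior_subset hq), (Submodule.mem_orthogonal' _ _).2 hpq⟩
    rwa [hq_eq]
  · exact (Submodule.mem_orthogonal' _ _).1
      (vsub_orthogonalProjection_mem_direction_orthogonal _ p)

theorem faceStable_iff_stableOnFacet {A B C D : E3} (h : AffineIndependent ℝ ![A, B, C, D])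
    (p : E3) (i : Fin 4) : FaceStable A B C D p i ↔ StableOnFacet ⟨![A, B, C, D], h⟩ p i := by
  fin_cases i <;>
  · refine stableOn_iff_of_range_points_eq _ ?_
    rw [Simplex.range_faceOpposite_points]
    ext x
    simp [Fin.exists_fin_succ, eq_comm]

theorem centroid_eq_smul_add {A B C D : E3} (h : AffineIndependent ℝ ![A, B, C, D]) :
    Simplex.centroid ⟨![A, B, C, D], h⟩ = (4 : ℝ)⁻¹ • (A + B + C + D) := by
  have hcard : ((3 : ℕ) : ℝ) + 1 = 4 := by norm_num
  rw [centroid_eq_inv_smul_sum_points, hcard]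
  exact congrArg _ (Fin.sum_univ_four _)

/-- **No homogeneous tetrahedron is monostable**: for any four affinely
independent points `A, B, C, D` in ℝ³, the tetrahedron loaded at the vertex
centroid `(A + B + C + D)/4` is not stable on exactly one face. -/
theorem homogeneous_tetrahedron_not_monostable (A B C D : E3)
    (h : AffineIndependent ℝ ![A, B, C, D]) :
    ¬ (∃! i : Fin 4, FaceStable A B C D ((4 : ℝ)⁻¹ • (A + B + C + D)) i) := by
  simp_rw [faceStable_iff_stableOnFacet h, ← centroid_eq_smul_add h]
  exact homogeneous_tetrahedron_not_monostable_general le_rfl _
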